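/- Let p and q be two distinct prime numbers, let G be a cyclic group of order p, and let A be a G-lattice. Then card H^1(G, A) = p^(d_p − d_q), where d_p is the dimension of the 𝔽_p-vector space (A ⊗ ℤ/pℤ)^G and d_q is the dimension of the 𝔽_q-vector space (A ⊗ ℤ/qℤ)^G. In particular d_q ≤ d_p. -/

import Mathlib

open scoped TensorProduct

/-- The submodule of `G`-fixed points of `ZMod k ⊗[ℤ] A`, where `ZMod k ⊗[ℤ] A` carries the
`G`-action induced (by base change) from the `G`-action `ρ` on `A`. -/
def fixedTensorSub (G : Type) [Group G] (A : Type) [AddCommGroup A] [Module ℤ A]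
    (ρ : Representation ℤ G A) (k : ℕ) : Submodule (ZMod k) (ZMod k ⊗[ℤ] A) where
  carrier := {x | ∀ g : G, LinearMap.baseChange (ZMod k) (ρ g) x = x}
  add_mem' hx hy := fun g => by rw [map_add, hx g, hy g]
  zero_mem' := fun g => by rw [map_zero]
  smul_mem' c x hx := fun g => by rw [map_smul, hx g]

/-!
Multiplication by `k ≠ 0` gives an exact sequence `0 → A → A → ℤ/k ⊗ A → 0` of representations,
hence a short exact sequence `0 → A^G / k A^G → (ℤ/k ⊗ A)^G → H¹(G, A)[k] → 0`. Counting yields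
`|(ℤ/k ⊗ A)^G| = k ^ r * |H¹(G, A)[k]|` with `r` the rank of `A^G`. If `G` has prime order `p`,
then `H¹(G, A)` is killed by `p`, so `k = q` gives `r = d_q` and `k = p` gives the order of
`H¹(G, A)`.
-/

open CategoryTheory groupCohomology

universe u

section AbelianGroups

theorem natCard_eq_index_range_mul_natCard_ker {M₁ M₂ M₃ M₄ M₅ : Type*} [AddCommGroup M₁]
    [AddCommGroup M₂] [AddCommGroup M₃] [AddCommGroup M₄] [AddCommGroup M₅] {f : M₁ →+ M₂}
    {g : M₂ →+ M₃} {h : M₃ →+ M₄} {i : M₄ →+ M₅} (hfg : Function.Exact f g)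
    (hgh : Function.Exact g h) (hhi : Function.Exact h i) :
    Nat.card M₃ = f.range.index * Nat.card i.ker := by
  rw [← h.ker.card_mul_index, AddSubgroup.index_ker, ← AddMonoidHom.exact_iff.1 hhi,
    AddMonoidHom.exact_iff.1 hgh, ← AddSubgroup.index_ker, AddMonoidHom.exact_iff.1 hfg]

theorem torsionBy_eq_bot_of_coprime {M : Type*} [AddCommGroup M] {m n : ℕ} (hmn : m.Coprime n)
    (hM : ∀ x : M, m • x = 0) : AddSubgroup.torsionBy M n = ⊥ := by
  refine (AddSubgroup.eq_bot_iff_forall _).2 fun x hx => ?_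
  have hnx : n • x = 0 := AddSubgroup.torsionBy.nsmul_iff.1 hx
  exact AddMonoid.addOrderOf_eq_one_iff.1 <| Nat.eq_one_of_dvd_coprimes hmn
    (addOrderOf_dvd_of_nsmul_eq_zero (hM x)) (addOrderOf_dvd_of_nsmul_eq_zero hnx)

variable (M : Type*) [AddCommGroup M] (k : ℕ)

theorem tensorMk_zmod_one_surjective :
    Function.Surjective (TensorProduct.mk ℤ (ZMod k) M 1) :=
  TensorProduct.mk_surjective ℤ M (ZMod k) ZMod.intCast_surjective

theorem exact_nsmul_tensorMk_zmod_one :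
    Function.Exact (k • (LinearMap.id : M →ₗ[ℤ] M)) (TensorProduct.mk ℤ (ZMod k) M 1) := by
  have exact_int : Function.Exact (k • (LinearMap.id : ℤ →ₗ[ℤ] ℤ))
      (Int.castAddHom (ZMod k)).toIntLinearMap := fun n => by
    simp [ZMod.intCast_zmod_eq_zero_iff_dvd, dvd_def, eq_comm]
  refine (Function.Exact.iff_of_ladder_linearEquiv (e₁ := TensorProduct.lid ℤ M)
    (e₂ := TensorProduct.lid ℤ M) (e₃ := .refl ℤ _) ?_ ?_).2
      (rTensor_exact M exact_int ZMod.intCast_surjective)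
  · exact TensorProduct.ext' fun n m => by simp [mul_smul, smul_comm k n m]
  · exact TensorProduct.ext' fun n m => by simp [TensorProduct.smul_tmul']

end AbelianGroups

section Cohomology

variable {R G : Type u} [CommRing R] [Group G]

theorem card_nsmul_H1 [Finite G] (A : Rep.{u} R G) (x : H1 A) : Nat.card G • x = 0 := by
  have := Fintype.ofFinite G
  induction x using H1_induction_on with | h f =>
  rw [← map_nsmul]
  -- Summing `f (g * h) = g • f h + f g` over `h` exhibits `|G| • f` as a coboundary.
  have sum_eq (g : G) : ∑ h, f h = A.ρ g (∑ h, f h) + Nat.card G • f g := by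
    rw [map_sum, ← Equiv.sum_comp (Equiv.mulLeft g)]
    simp [(mem_cocycles₁_iff f).1 f.2, Finset.sum_add_distrib]
  refine (H1π_eq_zero_iff _).2 ⟨-∑ h, f h, funext fun g => ?_⟩
  simpa [neg_add_eq_sub, sub_eq_iff_eq_add'] using! sum_eq g

theorem map_nsmul_id (A : Rep.{u} R G) (n i : ℕ) :
    map (MonoidHom.id G) (n • 𝟙 A) i = n • 𝟙 (groupCohomology A i) := by
  have : (functor R G i).Additive :=
    inferInstanceAs (cochainsFunctor R G ⋙ HomologicalComplex.homologyFunctor _ _ i).Additive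
  have map_id : (functor R G i).map (𝟙 A) = 𝟙 _ := CategoryTheory.Functor.map_id _ _
  exact map_id ▸ (functor R G i).map_nsmul

theorem rep_shortExact_of_exact {X : ShortComplex (Rep.{u} R G)}
    (hf : Function.Injective X.f.hom) (hfg : Function.Exact X.f.hom X.g.hom)
    (hg : Function.Surjective X.g.hom) : X.ShortExact where
  exact := (forget₂ _ (ModuleCat R)).reflects_exact_of_faithful _
    ((ShortComplex.ShortExact.moduleCat_exact_iff_function_exact _).2 hfg)
  mono_f := (Rep.mono_iff_injective _).2 hf
  epi_g := (Rep.epi_iff_surjective _).2 hg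

theorem natCard_groupCohomology_of_shortExact_nsmul {A B : Rep.{u} R G} {n : ℕ} {g : A ⟶ B}
    {w : (n • 𝟙 A) ≫ g = 0} (hX : (ShortComplex.mk (n • 𝟙 A) g w).ShortExact) (i : ℕ) :
    Nat.card (groupCohomology B i) =
      (nsmulAddMonoidHom (α := groupCohomology A i) n).range.index *
        Nat.card (AddSubgroup.torsionBy (groupCohomology A (i + 1)) n) := by
  have map_eq (j : ℕ) :
      (map (MonoidHom.id G) (n • 𝟙 A) j).hom.toAddMonoidHom = nsmulAddMonoidHom n := by
    rw [map_nsmul_id]; rfl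
  have torsionBy_eq : AddSubgroup.torsionBy (groupCohomology A (i + 1)) n =
      (map (MonoidHom.id G) (n • 𝟙 A) (i + 1)).hom.toAddMonoidHom.ker := by
    rw [map_eq]
    exact AddSubgroup.ext fun _ => AddSubgroup.torsionBy.nsmul_iff
  have exact_iff := @ShortComplex.ShortExact.moduleCat_exact_iff_function_exact R _
  rw [torsionBy_eq, ← map_eq]
  exact natCard_eq_index_range_mul_natCard_ker
    (g := (map (MonoidHom.id G) g i).hom.toAddMonoidHom)
    (h := (δ hX i (i + 1) rfl).hom.toAddMonoidHom)
    ((exact_iff _).1 (mapShortComplex₂_exact hX i))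
    ((exact_iff _).1 (mapShortComplex₃_exact hX rfl))
    ((exact_iff _).1 (mapShortComplex₁_exact hX rfl))

end Cohomology

section Reduction

variable {G A : Type} [Group G] [AddCommGroup A] (ρ : Representation ℤ G A) (k : ℕ)

/-- The reduction `ℤ/k ⊗ A` of a representation `A` over `ℤ`, with `G` acting on `A` only. It is
kept over `ℤ` so that it fits into an exact sequence with `A`. -/
noncomputable abbrev modRep : Rep ℤ G :=
  Rep.of ((Representation.trivial ℤ G (ZMod k)).tprod ρ)

/-- The reduction map `a ↦ 1 ⊗ a` as a morphism of representations. -/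
noncomputable def toModRep : Rep.of ρ ⟶ modRep ρ k :=
  Rep.ofHom ⟨TensorProduct.mk ℤ (ZMod k) A 1, fun g => by ext; simp⟩

theorem nsmul_comp_toModRep : (k • 𝟙 (Rep.of ρ)) ≫ toModRep ρ k = 0 := by
  ext a
  exact (exact_nsmul_tensorMk_zmod_one A k).apply_apply_eq_zero a

theorem natCard_H0_modRep : Nat.card (H0 (modRep ρ k)) = Nat.card (fixedTensorSub G A ρ k) :=
  Nat.card_congr (H0Iso (modRep ρ k)).toLinearEquiv.toEquiv

variable {k} in
theorem shortExact_nsmul_toModRep [Module.IsTorsionFree ℤ A] (hk : k ≠ 0) :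
    (ShortComplex.mk _ _ (nsmul_comp_toModRep ρ k)).ShortExact :=
  have : IsAddTorsionFree A := .of_isTorsionFree ℤ A
  rep_shortExact_of_exact (nsmul_right_injective hk) (exact_nsmul_tensorMk_zmod_one A k)
    (tensorMk_zmod_one_surjective A k)

variable [Module.Free ℤ A] [Module.Finite ℤ A]

variable {k} in
theorem natCard_fixedTensorSub (hk : k ≠ 0) :
    Nat.card (fixedTensorSub G A ρ k) = k ^ Module.finrank ℤ ρ.invariants *
      Nat.card (AddSubgroup.torsionBy (H1 (Rep.of ρ)) k) := by
  let e : H0 (Rep.of ρ) ≃+ ρ.invariants := (H0Iso (Rep.of ρ)).toLinearEquiv.toAddEquiv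
  have index_eq : (nsmulAddMonoidHom (α := ρ.invariants) k).range.index =
      (nsmulAddMonoidHom (α := H0 (Rep.of ρ)) k).range.index := by
    rw [← e.map_range_nsmulAddMonoidHom, AddSubgroup.index_map_equiv]
  rw [← natCard_H0_modRep, ← AddSubgroup.index_range_nsmul, index_eq]
  exact natCard_groupCohomology_of_shortExact_nsmul (shortExact_nsmul_toModRep ρ hk) 0

theorem pow_finrank_fixedTensorSub {p : ℕ} (hp : p.Prime) :
    p ^ Module.finrank (ZMod p) (fixedTensorSub G A ρ p) =
      p ^ Module.finrank ℤ ρ.invariants *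
        Nat.card (AddSubgroup.torsionBy (H1 (Rep.of ρ)) p) := by
  have : Fact p.Prime := ⟨hp⟩
  rw [← natCard_fixedTensorSub ρ hp.ne_zero, Module.natCard_eq_pow_finrank (K := ZMod p),
    Nat.card_zmod]

end Reduction

theorem card_H1_cyclic_prime_general {p q : ℕ} (hp : p.Prime) (hq : q.Prime)
    {G A : Type} [Group G] [AddCommGroup A] [Module.Free ℤ A] [Module.Finite ℤ A]
    (ρ : Representation ℤ G A) (hqH1 : AddSubgroup.torsionBy (H1 (Rep.of ρ)) q = ⊥) :
    Module.finrank (ZMod q) (fixedTensorSub G A ρ q) ≤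
      Module.finrank (ZMod p) (fixedTensorSub G A ρ p) ∧
    Nat.card (AddSubgroup.torsionBy (H1 (Rep.of ρ)) p) =
      p ^ (Module.finrank (ZMod p) (fixedTensorSub G A ρ p) -
        Module.finrank (ZMod q) (fixedTensorSub G A ρ q)) := by
  have rank_eq : Module.finrank (ZMod q) (fixedTensorSub G A ρ q) =
      Module.finrank ℤ ρ.invariants :=
    Nat.pow_right_injective hq.two_le <| by
      simpa [hqH1] using pow_finrank_fixedTensorSub ρ hq
  have pow_eq := pow_finrank_fixedTensorSub ρ hp
  rw [← rank_eq] at pow_eq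
  have rank_le := (Nat.pow_dvd_pow_iff_le_right hp.one_lt).1 (Dvd.intro _ pow_eq.symm)
  refine ⟨rank_le, Nat.eq_of_mul_eq_mul_left (pow_pos hp.pos _) (pow_eq.symm.trans ?_)⟩
  rw [← pow_add, Nat.add_sub_cancel' rank_le]

/-- Let `p` and `q` be distinct primes, `G` a cyclic group of order `p` and `A` a `G`-lattice.
Then `card H¹(G, A) = p ^ (d_p - d_q)` where `d_p = dim_{𝔽_p} (A ⊗ ℤ/pℤ)^G` and
`d_q = dim_{𝔽_q} (A ⊗ ℤ/qℤ)^G`; in particular `d_q ≤ d_p`. -/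
theorem card_H1_cyclic_prime
    (p q : ℕ) (hp : p.Prime) (hq : q.Prime) (hpq : p ≠ q)
    (G : Type) [Group G] [IsCyclic G] (hG : Nat.card G = p)
    (A : Type) [AddCommGroup A] [Module ℤ A] [Module.Free ℤ A] [Module.Finite ℤ A]
    (ρ : Representation ℤ G A) :
    Module.finrank (ZMod q) (fixedTensorSub G A ρ q) ≤
      Module.finrank (ZMod p) (fixedTensorSub G A ρ p) ∧
    Nat.card (groupCohomology.H1 (Rep.of ρ)) =
      p ^ (Module.finrank (ZMod p) (fixedTensorSub G A ρ p) -
        Module.finrank (ZMod q) (fixedTensorSub G A ρ q)) := by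
  obtain rfl : ‹Module ℤ A› = AddCommGroup.toIntModule A := Subsingleton.elim _ _
  have : Finite G := Nat.finite_of_card_ne_zero (hG ▸ hp.ne_zero)
  have nsmul_eq_zero : ∀ x : H1 (Rep.of ρ), p • x = 0 := hG ▸ card_nsmul_H1 (Rep.of ρ)
  have torsionBy_q : AddSubgroup.torsionBy (H1 (Rep.of ρ)) q = ⊥ :=
    torsionBy_eq_bot_of_coprime ((Nat.coprime_primes hp hq).2 hpq) nsmul_eq_zero
  have torsionBy_p : AddSubgroup.torsionBy (H1 (Rep.of ρ)) p = ⊤ :=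
    (AddSubgroup.eq_top_iff' _).2 fun x => AddSubgroup.torsionBy.nsmul_iff.2 (nsmul_eq_zero x)
  simpa only [torsionBy_p, AddSubgroup.card_top] using
    card_H1_cyclic_prime_general hp hq ρ torsionBy_q
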